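/- Let 𝒰 be a group of unitary operators on a complex Hilbert space H, let f ∈ H be a frame vector for 𝒰 with frame operator S, let Φ : H → ℓ²(𝒰) be the analysis operator of the canonical Parseval frame {S^{-1/2}Uf}_{U∈𝒰}, and define E = Φ S^{1/2} Φ*. Then E² is unitarily equivalent to S ⊕ 0: the map U₀ : H ⊕ Φ(H)^⊥ → ℓ²(𝒰) defined by U₀(g ⊕ h) = Φg + h is a unitary isomorphism and E² U₀ = U₀ (S ⊕ 0), where 0 denotes the zero operator on the orthogonal complement Φ(H)^⊥ in ℓ²(𝒰). -/

import Mathlib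

local notation "⟪" x ", " y "⟫" => @inner ℂ _ _ x y

/-!
If `V : H → K` is an isometry, then `K = V(H) ⊕ V(H)ᗮ`, so `g ⊕ h ↦ V g + h` identifies
`H ⊕ V(H)ᗮ` with `K`. Since `V† V = 1` and `V†` vanishes on `V(H)ᗮ`, this identification turns
`A ⊕ 0` into `V A V†`, and `A ↦ V A V†` is multiplicative. An analysis operator `Φ` of a family
with frame operator `S` satisfies `Φ† Φ = S`, and the frame operator of `{R fᵢ}` is `R S R†`; for
`R = S^{-1/2}` this is the identity, so `Φ` is an isometry and
`E² = (Φ S^{1/2} Φ†)² = Φ S Φ†` corresponds to `S ⊕ 0`.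
-/

open ContinuousLinearMap (adjoint)

theorem mul_mul_eq_one_of_mul_self_inverse {M : Type*} [Monoid M] {r s : M}
    (hrs : r * r * s = 1) (hsr : s * (r * r) = 1) : r * (s * r) = 1 := by
  rw [mul_assoc] at hrs
  rw [← mul_assoc] at hsr
  rw [left_inv_eq_right_inv hsr hrs, hrs]

section Isometry

variable {𝕜 H K : Type*} [RCLike 𝕜]
  [NormedAddCommGroup H] [InnerProductSpace 𝕜 H] [CompleteSpace H]
  [NormedAddCommGroup K] [InnerProductSpace 𝕜 K]

/-- The unitary isomorphism `g ⊕ h ↦ V g + h` from `H ⊕ V(H)ᗮ` onto `K` attached to an isometry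
`V : H → K`, where the Hilbert sum is encoded as `WithLp 2` of the product. -/
noncomputable def rangeSumEquiv (V : H →ₗᵢ[𝕜] K) :
    WithLp 2 (H × (LinearMap.range V.toLinearMap)ᗮ) ≃ₗᵢ[𝕜] K :=
  haveI : CompleteSpace (LinearMap.range V.toLinearMap) :=
    V.isometry.isUniformInducing.isComplete_range.completeSpace_coe
  (LinearIsometryEquiv.withLpProdCongr 2 V.equivRange (.refl 𝕜 _)).trans
    (LinearMap.range V.toLinearMap).orthogonalDecomposition.symm

theorem rangeSumEquiv_apply (V : H →ₗᵢ[𝕜] K)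
    (z : WithLp 2 (H × (LinearMap.range V.toLinearMap)ᗮ)) :
    rangeSumEquiv V z = V z.fst + z.snd :=
  rfl

variable [CompleteSpace K]

theorem adjoint_rangeSumEquiv_apply (V : H →ₗᵢ[𝕜] K)
    (z : WithLp 2 (H × (LinearMap.range V.toLinearMap)ᗮ)) :
    adjoint V.toContinuousLinearMap (rangeSumEquiv V z) = z.fst := by
  have hfst : adjoint V.toContinuousLinearMap (V z.fst) = z.fst :=
    DFunLike.congr_fun
      (V.toContinuousLinearMap.norm_map_iff_adjoint_comp_self.mp V.norm_map) z.fst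
  have hsnd : adjoint V.toContinuousLinearMap z.snd = 0 :=
    V.toContinuousLinearMap.orthogonal_range.le z.snd.2
  rw [rangeSumEquiv_apply, map_add, hfst, hsnd, add_zero]

theorem conj_adjoint_rangeSumEquiv_apply (V : H →ₗᵢ[𝕜] K) (A : H →L[𝕜] H)
    (z : WithLp 2 (H × (LinearMap.range V.toLinearMap)ᗮ)) :
    (V.toContinuousLinearMap ∘L A ∘L adjoint V.toContinuousLinearMap) (rangeSumEquiv V z) =
      rangeSumEquiv V (WithLp.toLp 2 (A z.fst, 0)) := by
  rw [ContinuousLinearMap.comp_apply, ContinuousLinearMap.comp_apply, adjoint_rangeSumEquiv_apply]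
  simp [rangeSumEquiv_apply]

theorem conj_adjoint_comp_conj_adjoint {V : H →L[𝕜] K} (hV : adjoint V ∘L V = 1)
    (A B : H →L[𝕜] H) :
    (V ∘L A ∘L adjoint V) ∘L (V ∘L B ∘L adjoint V) = V ∘L (A ∘L B) ∘L adjoint V := by
  calc (V ∘L A ∘L adjoint V) ∘L (V ∘L B ∘L adjoint V)
      = V ∘L A ∘L (adjoint V ∘L V) ∘L B ∘L adjoint V := rfl
    _ = V ∘L (A ∘L B) ∘L adjoint V := by rw [hV]; rfl

end Isometry

section Frame

variable {𝕜 ι H K : Type*} [RCLike 𝕜]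
  [NormedAddCommGroup H] [InnerProductSpace 𝕜 H]
  [NormedAddCommGroup K] [InnerProductSpace 𝕜 K]

/-- `S` is the frame operator `x ↦ ∑ᵢ ⟨x, fᵢ⟩ fᵢ` of the family `f`. Mathlib's inner product is
linear in the second variable, so the coefficient reads `inner 𝕜 (f i) x`. -/
def IsFrameOperator (f : ι → H) (S : H →L[𝕜] H) : Prop :=
  ∀ x, HasSum (fun i => inner 𝕜 (f i) x • f i) (S x)

variable [CompleteSpace H] {f : ι → H} {S : H →L[𝕜] H}

theorem IsFrameOperator.conj_adjoint [CompleteSpace K] (hS : IsFrameOperator f S)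
    (T : H →L[𝕜] K) : IsFrameOperator (fun i => T (f i)) (T ∘L S ∘L adjoint T) := fun y => by
  simpa [ContinuousLinearMap.adjoint_inner_right] using (hS (adjoint T y)).mapL T

theorem IsFrameOperator.adjoint_comp_self_of_analysis (hS : IsFrameOperator f S)
    {Φ : H →L[𝕜] lp (fun _ : ι => 𝕜) 2} (hΦ : ∀ g i, Φ g i = inner 𝕜 (f i) g) :
    adjoint Φ ∘L Φ = S := by
  refine ContinuousLinearMap.ext fun y => ext_inner_left 𝕜 fun x => ?_
  have hsum : HasSum (fun i => inner 𝕜 (Φ x i) (Φ y i)) (inner 𝕜 x (S y)) := by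
    simpa [hΦ, inner_smul_right] using (hS y).mapL (innerSL 𝕜 x)
  calc inner 𝕜 x (adjoint Φ (Φ y))
      = inner 𝕜 (Φ x) (Φ y) := Φ.adjoint_inner_right x (Φ y)
    _ = inner 𝕜 x (S y) := (lp.hasSum_inner (Φ x) (Φ y)).unique hsum

theorem dilation_operator_sq_unitarily_equivalent_general (hS : IsFrameOperator f S)
    {R : H →L[𝕜] H} (hR : R ∘L S ∘L adjoint R = 1) {T : H →L[𝕜] H} (hT : T ∘L T = S)
    {Φ : H →L[𝕜] lp (fun _ : ι => 𝕜) 2} (hΦ : ∀ g i, Φ g i = inner 𝕜 (R (f i)) g)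
    {E : lp (fun _ : ι => 𝕜) 2 →L[𝕜] lp (fun _ : ι => 𝕜) 2} (hE : E = Φ ∘L T ∘L adjoint Φ) :
    ∃ U₀ : WithLp 2 (H × (LinearMap.range (Φ : H →ₗ[𝕜] lp (fun _ : ι => 𝕜) 2))ᗮ) ≃ₗᵢ[𝕜]
        lp (fun _ : ι => 𝕜) 2,
      (∀ g h, U₀ (WithLp.toLp 2 (g, h)) = Φ g + h) ∧
      ∀ g h, (E ∘L E) (U₀ (WithLp.toLp 2 (g, h))) = U₀ (WithLp.toLp 2 (S g, 0)) := by
  have hΦΦ : adjoint Φ ∘L Φ = 1 :=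
    ((hS.conj_adjoint R).adjoint_comp_self_of_analysis hΦ).trans hR
  have hEE : E ∘L E = Φ ∘L S ∘L adjoint Φ := by
    rw [hE, conj_adjoint_comp_conj_adjoint hΦΦ, hT]
  let V : H →ₗᵢ[𝕜] lp (fun _ : ι => 𝕜) 2 := ⟨Φ, Φ.norm_map_iff_adjoint_comp_self.mpr hΦΦ⟩
  refine ⟨rangeSumEquiv V, fun g h => rangeSumEquiv_apply V _, fun g h => ?_⟩
  rw [hEE]
  exact conj_adjoint_rangeSumEquiv_apply V S _

end Frame

/-- With `Φ` the analysis operator of the canonical Parseval frame `{S^{-1/2}Uf}` and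
`E = Φ S^{1/2} Φ*`, the operator `E²` is unitarily equivalent to `S ⊕ 0`: the map
`U₀ : H ⊕ Φ(H)^⊥ → ℓ²(𝒰)`, `U₀(g ⊕ h) = Φg + h`, is a unitary isomorphism and
`E² U₀ = U₀ (S ⊕ 0)`, where `0` is the zero operator on `Φ(H)^⊥`. -/
theorem dilation_operator_sq_unitarily_equivalent
    {H : Type} [NormedAddCommGroup H] [InnerProductSpace ℂ H] [CompleteSpace H]
    (𝒰 : Subgroup (H ≃ₗᵢ[ℂ] H)) (f : H) (A B : ℝ) (hA : 0 < A) (hAB : A ≤ B)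
    -- `{Uf}_{U ∈ 𝒰}` is a frame for `H`
    (hframe : ∀ x : H,
      A * ‖x‖ ^ 2 ≤ ∑' U : 𝒰, ‖⟪(U : H ≃ₗᵢ[ℂ] H) f, x⟫‖ ^ 2 ∧
      ∑' U : 𝒰, ‖⟪(U : H ≃ₗᵢ[ℂ] H) f, x⟫‖ ^ 2 ≤ B * ‖x‖ ^ 2)
    -- `S` is the frame operator of `{Uf}_{U ∈ 𝒰}`
    (S : H →L[ℂ] H)
    (hS : ∀ x : H, HasSum (fun U : 𝒰 => ⟪(U : H ≃ₗᵢ[ℂ] H) f, x⟫ • (U : H ≃ₗᵢ[ℂ] H) f) (S x))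
    -- `R = S^{-1/2}`: the positive square root of the inverse of `S`
    (R : H →L[ℂ] H) (hRpos : R.IsPositive)
    (hRS : (R ∘L R) ∘L S = ContinuousLinearMap.id ℂ H)
    (hSR : S ∘L (R ∘L R) = ContinuousLinearMap.id ℂ H)
    -- `Shalf = S^{1/2}`: the positive square root of `S`
    (Shalf : H →L[ℂ] H) (hShalfpos : Shalf.IsPositive) (hShalf : Shalf ∘L Shalf = S)
    -- `Φ` is the analysis operator of the canonical Parseval frame `{S^{-1/2}Uf}`
    (Φ : H →L[ℂ] lp (fun _ : 𝒰 => ℂ) 2)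
    (hΦ : ∀ (g : H) (U : 𝒰), Φ g U = ⟪R ((U : H ≃ₗᵢ[ℂ] H) f), g⟫)
    -- `E = Φ S^{1/2} Φ*`
    (E : lp (fun _ : 𝒰 => ℂ) 2 →L[ℂ] lp (fun _ : 𝒰 => ℂ) 2)
    (hE : E = Φ ∘L Shalf ∘L ContinuousLinearMap.adjoint Φ)
    -- `W = Φ(H)^⊥`, the orthogonal complement of `Φ(H)` in `ℓ²(𝒰)`
    (W : Submodule ℂ (lp (fun _ : 𝒰 => ℂ) 2))
    (hW : W = (LinearMap.range (Φ : H →ₗ[ℂ] lp (fun _ : 𝒰 => ℂ) 2))ᗮ) :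
    ∃ U₀ : WithLp 2 (H × W) ≃ₗᵢ[ℂ] lp (fun _ : 𝒰 => ℂ) 2,
      -- `U₀ (g ⊕ h) = Φ g + h`
      (∀ (g : H) (h : W), U₀ ((WithLp.equiv 2 (H × W)).symm (g, h)) = Φ g + (h : lp (fun _ : 𝒰 => ℂ) 2)) ∧
      -- `E² U₀ = U₀ (S ⊕ 0)`
      (∀ (g : H) (h : W),
        (E ∘L E) (U₀ ((WithLp.equiv 2 (H × W)).symm (g, h))) =
          U₀ ((WithLp.equiv 2 (H × W)).symm (S g, 0))) := by
  have hR : R ∘L S ∘L ContinuousLinearMap.adjoint R = 1 := by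
    rw [hRpos.isSelfAdjoint.adjoint_eq]
    exact mul_mul_eq_one_of_mul_self_inverse hRS hSR
  subst hW
  exact dilation_operator_sq_unitarily_equivalent_general hS hR hShalf hΦ hE
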